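/- For the co-R-matrix R on O_{q^2}(SL_2) given on generators by R(a⊗a)=q, R(a⊗d)=q^{-1}, R(d⊗a)=q^{-1}, R(d⊗d)=q, R(b⊗c)=q-q^{-3}, and R zero on all other pairs of generators, the induced braiding c_{V,V}(u⊗v) = v_(0)⊗u_(0)·R(u_(1)⊗v_(1)) on the standard corepresentation V satisfies the Kauffman bracket skein relation: c_{V,V} = q·id_{V⊗V} + q^{-1}·(cup∘cap), where cap: V⊗V→k is cap(v_+⊗v_-)=-q^{5/2}, cap(v_-⊗v_+)=q^{1/2}, cap(v_±⊗v_±)=0, and cup: k→V⊗V is cup(1)=-q^{-5/2}v_-⊗v_+ + q^{-1/2}v_+⊗v_-. -/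

import Mathlib

/-!
STATEMENT 17: For the co-R-matrix R on O_{q^2}(SL_2), given on generators by
R(a⊗a)=R(d⊗d)=q, R(a⊗d)=R(d⊗a)=q^{-1}, R(b⊗c)=q-q^{-3}, zero otherwise, the induced
braiding c_{V,V}(u⊗v) = v₀⊗u₀·R(u₁⊗v₁) on the standard corepresentation V satisfies
the Kauffman bracket skein relation c_{V,V} = q·id + q^{-1}·(cup∘cap), where
cap(v_+⊗v_-)=-q^{5/2}, cap(v_-⊗v_+)=q^{1/2}, cap(v_±⊗v_±)=0 and
cup(1) = -q^{-5/2} v_-⊗v_+ + q^{-1/2} v_+⊗v_-.  Here s = q^{1/2}, V = k² with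
v_+ = (1,0), v_- = (0,1), and the coaction matrix is ((a,b),(c,d)):
δ(v_ε) = Σ_η v_η ⊗ x_{ηε}.
-/

noncomputable section
open scoped TensorProduct

inductive Gen : Type | a | b | c | d

variable {k : Type} [Field k]

/-- basis of V: e true = v_+, e false = v_-. -/
def e : Bool → k × k
  | true => ((1 : k), (0 : k))
  | false => ((0 : k), (1 : k))

/-- coaction matrix entries x_{ηε} for the standard corepresentation. -/
def xg : Bool → Bool → Gen
  | true, true => Gen.a
  | true, false => Gen.b
  | false, true => Gen.c
  | false, false => Gen.d

/-- The co-R-matrix entries on generators (with q = s²). -/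
def Rgen (s : kˣ) : Gen → Gen → k
  | Gen.a, Gen.a => (s : k) ^ 2
  | Gen.a, Gen.d => ((s⁻¹ : kˣ) : k) ^ 2
  | Gen.d, Gen.a => ((s⁻¹ : kˣ) : k) ^ 2
  | Gen.d, Gen.d => (s : k) ^ 2
  | Gen.b, Gen.c => (s : k) ^ 2 - ((s⁻¹ : kˣ) : k) ^ 6
  | _, _ => 0

/-- The linear map k × k →ₗ M sending (1,0) to m₁ and (0,1) to m₂. -/
def row {M : Type} [AddCommGroup M] [Module k M] (m₁ m₂ : M) : (k × k) →ₗ[k] M :=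
  (LinearMap.toSpanSingleton k M m₁).coprod (LinearMap.toSpanSingleton k M m₂)

/-- The bilinear map (k×k) → (k×k) → M with the four prescribed basis values. -/
def bil {M : Type} [AddCommGroup M] [Module k M] (mtt mtf mft mff : M) :
    (k × k) →ₗ[k] (k × k) →ₗ[k] M :=
  (LinearMap.toSpanSingleton k ((k × k) →ₗ[k] M) (row mtt mtf)).coprod
    (LinearMap.toSpanSingleton k ((k × k) →ₗ[k] M) (row mft mff))

/-- The value of the braiding on basis vectors, computed from the co-R-matrix:
c(v_ε ⊗ v_φ) = Σ_{η,μ} R(x_{ηε} ⊗ x_{μφ}) · v_μ ⊗ v_η. -/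
def cVal (s : kˣ) (ε φ : Bool) : (k × k) ⊗[k] (k × k) :=
  ∑ η : Bool, ∑ μ : Bool,
    Rgen s (xg η ε) (xg μ φ) • ((e μ : k × k) ⊗ₜ[k] (e η : k × k))

/-- The braiding c_{V,V}. -/
def cmap (s : kˣ) : (k × k) ⊗[k] (k × k) →ₗ[k] (k × k) ⊗[k] (k × k) :=
  TensorProduct.lift
    (bil (cVal s true true) (cVal s true false) (cVal s false true) (cVal s false false))

/-- cap: V⊗V → k. -/
def cap (s : kˣ) : (k × k) ⊗[k] (k × k) →ₗ[k] k :=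
  TensorProduct.lift (bil (0 : k) (-(s : k) ^ 5) ((s : k)) (0 : k))

/-- cup: k → V⊗V. -/
def cup (s : kˣ) : k →ₗ[k] (k × k) ⊗[k] (k × k) :=
  LinearMap.toSpanSingleton k _
    ((-((s⁻¹ : kˣ) : k) ^ 5) • (((0 : k), (1 : k)) ⊗ₜ[k] ((1 : k), (0 : k)))
      + ((s⁻¹ : kˣ) : k) • (((1 : k), (0 : k)) ⊗ₜ[k] ((0 : k), (1 : k))))

/-- The Kauffman bracket relation c = q·id + q^{-1}·(cup∘cap), with q = s². -/
theorem stmt17 (s : kˣ) :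
    cmap (k := k) s
      = (s : k) ^ 2 • (LinearMap.id : (k × k) ⊗[k] (k × k) →ₗ[k] (k × k) ⊗[k] (k × k))
        + ((s⁻¹ : kˣ) : k) ^ 2 • (cup s ∘ₗ cap s) := by
  have hs : (s : k) ≠ 0 := s.ne_zero
  have e1 : ((s⁻¹ : kˣ) : k) = (s : k)⁻¹ := by simp
  apply TensorProduct.ext
  apply LinearMap.prod_ext <;> apply LinearMap.ext_ring <;>
    apply LinearMap.prod_ext <;> apply LinearMap.ext_ring <;>
    simp [cmap, cap, cup, bil, row, cVal, Rgen, xg, e, smul_smul, smul_add] <;>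
    match_scalars <;> field_simp <;> ring

end
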